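/- Let $d \ge 1$ and let $L$ be a real $(d+1) \times (d+1)$ matrix satisfying $L \eta L^T = \eta$. Then $\max_{\alpha, \beta} |L_{\alpha\beta}| \le |L_{00}|$. -/

import Mathlib

/-!
Call the indices other than that of the `-1` in `η` spatial. The diagonal of `L η Lᵀ = η` says that
the squares of the spatial entries of a row sum to `t ^ 2 - 1` in the time row and to `t ^ 2 + 1` in
a spatial row, where `t` is the entry of that row in the time column. The time row is thus bounded
by its diagonal entry `L₀₀`. As `Lᵀ` also preserves `η`, the same holds for the time column, with
room to spare: `Lᵢ₀ ^ 2 + 1 ≤ L₀₀ ^ 2`, which absorbs the `+ 1` of the spatial rows.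
-/

/-- The Minkowski metric matrix `η = diag(-1, 1, …, 1)` on `Fin (d+1)`. -/
noncomputable def minkowskiEta (d : ℕ) : Matrix (Fin (d + 1)) (Fin (d + 1)) ℝ :=
  Matrix.diagonal (fun i => if i = 0 then (-1 : ℝ) else 1)

open scoped Matrix

theorem mul_mul_eq_swap_of_mul_self_eq_one {M : Type*} [Monoid M] [IsDedekindFiniteMonoid M]
    {a b c : M} (hc : c * c = 1) (h : a * c * b = c) : b * c * a = c := by
  have right_inv : a * (c * b * c) = 1 := by rw [← mul_assoc, ← mul_assoc, h, hc]
  have left_inv : c * b * c * a = 1 := mul_eq_one_comm.mp right_inv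
  calc b * c * a = c * c * (b * c * a) := by rw [hc, one_mul]
    _ = c * (c * b * c * a) := by simp only [mul_assoc]
    _ = c := by rw [left_inv, mul_one]

theorem mul_diagonal_mul_transpose_apply_self {m n R : Type*} [Fintype n] [DecidableEq n]
    [CommSemiring R] (A : Matrix m n R) (w : n → R) (i : m) :
    (A * Matrix.diagonal w * Aᵀ) i i = ∑ j, w j * A i j ^ 2 := by
  rw [Matrix.mul_apply]
  refine Finset.sum_congr rfl fun j _ => ?_
  rw [Matrix.mul_diagonal, Matrix.transpose_apply]
  ring

section Lorentz

variable {ι : Type*} [DecidableEq ι]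

/-- The Minkowski metric matrix over a ring `R`, with an arbitrary index type and with `o` as the
time index: diagonal, with `-1` at `o` and `1` at every other index. -/
def minkowskiMatrix (R : Type*) [Ring R] (o : ι) : Matrix ι ι R :=
  Matrix.diagonal fun i => if i = o then -1 else 1

variable {R : Type*}

/-- Lorentz matrices with time index `o`: the matrices `L` with `L η Lᵀ = η`. -/
def IsLorentz [Fintype ι] [Ring R] (o : ι) (L : Matrix ι ι R) : Prop :=
  L * minkowskiMatrix R o * Lᵀ = minkowskiMatrix R o

theorem minkowskiMatrix_apply_time [Ring R] (o : ι) : minkowskiMatrix R o o o = -1 := by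
  rw [minkowskiMatrix, Matrix.diagonal_apply_eq, if_pos rfl]

theorem minkowskiMatrix_apply_space [Ring R] {o i : ι} (hi : i ≠ o) :
    minkowskiMatrix R o i i = 1 := by
  rw [minkowskiMatrix, Matrix.diagonal_apply_eq, if_neg hi]

theorem minkowskiMatrix_mul_self [Fintype ι] [Ring R] (o : ι) :
    minkowskiMatrix R o * minkowskiMatrix R o = 1 := by
  rw [minkowskiMatrix, Matrix.diagonal_mul_diagonal, ← Matrix.diagonal_one]
  congr 1
  funext i
  split_ifs <;> simp

namespace IsLorentz

variable [Fintype ι] [CommRing R] {o : ι} {L : Matrix ι ι R}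

theorem transpose (hL : IsLorentz o L) : IsLorentz o Lᵀ :=
  mul_mul_eq_swap_of_mul_self_eq_one (minkowskiMatrix_mul_self o) hL

theorem sum_space_sq (hL : IsLorentz o L) (i : ι) :
    ∑ j ∈ Finset.univ.erase o, L i j ^ 2 = L i o ^ 2 + minkowskiMatrix R o i i := by
  have row_norm : ∑ j, (if j = o then -1 else 1) * L i j ^ 2 = minkowskiMatrix R o i i :=
    (mul_diagonal_mul_transpose_apply_self L _ i).symm.trans (congrFun₂ hL i i)
  have space_terms : ∑ j ∈ Finset.univ.erase o, (if j = o then -1 else 1) * L i j ^ 2 =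
      ∑ j ∈ Finset.univ.erase o, L i j ^ 2 :=
    Finset.sum_congr rfl fun j hj => by rw [if_neg (Finset.ne_of_mem_erase hj), one_mul]
  rw [← Finset.add_sum_erase _ _ (Finset.mem_univ o), if_pos rfl, space_terms] at row_norm
  linear_combination row_norm

variable [LinearOrder R] [IsStrictOrderedRing R]

theorem space_sq_le (hL : IsLorentz o L) (i : ι) {j : ι} (hj : j ≠ o) :
    L i j ^ 2 ≤ L i o ^ 2 + minkowskiMatrix R o i i := by
  rw [← hL.sum_space_sq i]
  exact Finset.single_le_sum (f := fun j => L i j ^ 2) (fun _ _ => sq_nonneg _)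
    (Finset.mem_erase.mpr ⟨hj, Finset.mem_univ j⟩)

theorem time_row_sq_add_one_le (hL : IsLorentz o L) {j : ι} (hj : j ≠ o) :
    L o j ^ 2 + 1 ≤ L o o ^ 2 := by
  have h := hL.space_sq_le o hj
  rw [minkowskiMatrix_apply_time] at h
  linarith

theorem time_col_sq_add_one_le (hL : IsLorentz o L) {i : ι} (hi : i ≠ o) :
    L i o ^ 2 + 1 ≤ L o o ^ 2 :=
  hL.transpose.time_row_sq_add_one_le hi

theorem space_row_sq_le (hL : IsLorentz o L) {i j : ι} (hi : i ≠ o) (hj : j ≠ o) :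
    L i j ^ 2 ≤ L i o ^ 2 + 1 := by
  simpa only [minkowskiMatrix_apply_space hi] using hL.space_sq_le i hj

end IsLorentz

theorem lorentz_matrix_entry_bound_general [Fintype ι] [CommRing R] [LinearOrder R]
    [IsStrictOrderedRing R] {o : ι} {L : Matrix ι ι R} (hL : IsLorentz o L) (α β : ι) :
    |L α β| ≤ |L o o| := by
  rw [← sq_le_sq]
  rcases eq_or_ne α o with rfl | hα
  · rcases eq_or_ne β α with rfl | hβ
    · exact le_rfl
    · exact (lt_add_one _).le.trans (hL.time_row_sq_add_one_le hβ)
  · rcases eq_or_ne β o with rfl | hβ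
    · exact (lt_add_one _).le.trans (hL.time_col_sq_add_one_le hα)
    · exact (hL.space_row_sq_le hα hβ).trans (hL.time_col_sq_add_one_le hα)

end Lorentz

/-- Matrix form of Lemma 3.1: every entry of a Lorentz matrix is bounded in
absolute value by `|L₀₀|`. -/
theorem lorentz_matrix_entry_bound
    (d : ℕ) (hd : 1 ≤ d) (L : Matrix (Fin (d + 1)) (Fin (d + 1)) ℝ)
    (hL : L * minkowskiEta d * L.transpose = minkowskiEta d) :
    ∀ α β, |L α β| ≤ |L 0 0| :=
  lorentz_matrix_entry_bound_general (o := 0) hL
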